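/- A bounded linear operator on a Hilbert space is compact if and only if its range contains no infinite-dimensional closed subspace. -/

import Mathlib

/-!
A compact operator onto a Banach space is open, so the target is locally compact and hence finite
dimensional; restricting `T` to the preimage of a closed subspace of its range gives one direction.

For the converse fix `δ > 0` and let `M` be a subspace maximal for `δ * ‖x‖ ≤ ‖T x‖` on `M`. The
image of its closure is a closed subspace of the range, so `M` is finite dimensional. A vector `x`
with `x ⟂ M` and `T x ⟂ T M` could by Pythagoras be adjoined to `M` if `‖T x‖ > δ * ‖x‖`, so `T` is
bounded by `δ` on the orthogonal complement of the finite-dimensional space `M + T† T M`. Hence `T`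
is within `δ` of an operator of finite rank.
-/

open Submodule
open scoped InnerProduct InnerProductSpace Topology

section Banach

variable {𝕜 E F : Type*} [NontriviallyNormedField 𝕜] [CompleteSpace 𝕜]
  [NormedAddCommGroup E] [NormedSpace 𝕜 E] [CompleteSpace E]
  [NormedAddCommGroup F] [NormedSpace 𝕜 F] [CompleteSpace F]

theorem finiteDimensional_of_isCompactOperator_of_surjective {T : E →L[𝕜] F}
    (hT : IsCompactOperator T) (hsurj : Function.Surjective T) : FiniteDimensional 𝕜 F := by
  obtain ⟨C, hC, hpre⟩ := hT
  have hnhds : C ∈ 𝓝 (0 : F) := by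
    rw [← map_zero T]
    exact Filter.mem_of_superset ((T.isOpenMap hsurj).image_mem_nhds hpre)
      (Set.image_preimage_subset T C)
  exact .of_isCompactOperator_id ⟨C, hC, hnhds⟩

theorem finiteDimensional_of_isCompactOperator_of_subset_range {T : E →L[𝕜] F}
    (hT : IsCompactOperator T) {K : Submodule 𝕜 F} (hK : IsClosed (K : Set F))
    (hKT : (K : Set F) ⊆ Set.range T) : FiniteDimensional 𝕜 K := by
  let M : Submodule 𝕜 E := K.comap (T : E →ₗ[𝕜] F)
  have : CompleteSpace M := (hK.preimage T.continuous).completeSpace_coe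
  have : CompleteSpace K := hK.completeSpace_coe
  let S : M →L[𝕜] K := (T ∘L M.subtypeL).codRestrict K fun x => x.2
  have hS : IsCompactOperator S := (hT.comp_clm M.subtypeL).codRestrict (fun x => x.2) hK
  refine finiteDimensional_of_isCompactOperator_of_surjective hS ?_
  rintro ⟨y, hy⟩
  obtain ⟨x, rfl⟩ := hKT hy
  exact ⟨⟨x, hy⟩, rfl⟩

end Banach

section Normed

variable {𝕜 E F : Type*} [NontriviallyNormedField 𝕜]
  [NormedAddCommGroup E] [NormedSpace 𝕜 E] [NormedAddCommGroup F] [NormedSpace 𝕜 F]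

/-- The operator `T` is bounded below on the subspace `M` with the explicit constant `δ`, an
arbitrary real number; the condition is vacuous for `δ ≤ 0`. -/
def IsBoundedBelowOn (T : E →L[𝕜] F) (δ : ℝ) (M : Submodule 𝕜 E) : Prop :=
  ∀ x ∈ M, δ * ‖x‖ ≤ ‖T x‖

namespace IsBoundedBelowOn

variable {T : E →L[𝕜] F} {δ : ℝ} {M : Submodule 𝕜 E}

theorem topologicalClosure (hM : IsBoundedBelowOn T δ M) :
    IsBoundedBelowOn T δ M.topologicalClosure := by
  have hclosed : IsClosed {x : E | δ * ‖x‖ ≤ ‖T x‖} := isClosed_le (by fun_prop) (by fun_prop)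
  exact fun x hx => closure_minimal hM hclosed hx

theorem span_singleton {x : E} (hx : δ * ‖x‖ ≤ ‖T x‖) : IsBoundedBelowOn T δ (𝕜 ∙ x) := by
  intro y hy
  obtain ⟨a, rfl⟩ := mem_span_singleton.1 hy
  calc δ * ‖a • x‖ = ‖a‖ * (δ * ‖x‖) := by rw [norm_smul]; ring
    _ ≤ ‖a‖ * ‖T x‖ := by gcongr
    _ = ‖T (a • x)‖ := by rw [map_smul, norm_smul]

theorem antilipschitzWith_comp_subtypeL (hδ : 0 < δ) (hM : IsBoundedBelowOn T δ M) :
    AntilipschitzWith (Real.toNNReal δ⁻¹) (T ∘L M.subtypeL) := by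
  refine AddMonoidHomClass.antilipschitz_of_bound _ fun x => ?_
  rw [Real.coe_toNNReal _ (by positivity), le_inv_mul_iff₀ hδ]
  exact hM x x.2

end IsBoundedBelowOn

theorem exists_maximal_isBoundedBelowOn (T : E →L[𝕜] F) (δ : ℝ) :
    ∃ M : Submodule 𝕜 E, Maximal (IsBoundedBelowOn T δ) M := by
  have hbot : IsBoundedBelowOn T δ (⊥ : Submodule 𝕜 E) := by
    intro x hx
    simp [(mem_bot 𝕜).1 hx]
  have hub : ∀ c ⊆ {M | IsBoundedBelowOn T δ M}, IsChain (· ≤ ·) c → ∀ N ∈ c,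
      ∃ L ∈ {M | IsBoundedBelowOn T δ M}, ∀ N ∈ c, N ≤ L := by
    refine fun c hc hchain N hN => ⟨sSup c, fun x hx => ?_, fun _ => le_sSup⟩
    obtain ⟨L, hL, hxL⟩ := (mem_sSup_of_directed ⟨N, hN⟩ hchain.directedOn).1 hx
    exact hc hL x hxL
  obtain ⟨M, -, hM⟩ := zorn_le_nonempty₀ _ hub ⊥ hbot
  exact ⟨M, hM⟩

theorem finiteDimensional_of_isBoundedBelowOn [CompleteSpace E] {T : E →L[𝕜] F} {δ : ℝ}
    {M : Submodule 𝕜 E} (hδ : 0 < δ) (hM : IsBoundedBelowOn T δ M)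
    (hT : ∀ K : Submodule 𝕜 F, IsClosed (K : Set F) → (K : Set F) ⊆ Set.range T →
      FiniteDimensional 𝕜 K) : FiniteDimensional 𝕜 M := by
  let N := M.topologicalClosure
  have : CompleteSpace N := M.isClosed_topologicalClosure.completeSpace_coe
  let S : N →L[𝕜] F := T ∘L N.subtypeL
  have hS := hM.topologicalClosure.antilipschitzWith_comp_subtypeL hδ
  have : FiniteDimensional 𝕜 (LinearMap.range (S : N →ₗ[𝕜] F)) :=
    hT _ (hS.isClosed_range S.uniformContinuous) (by rintro _ ⟨x, rfl⟩; exact ⟨x, rfl⟩)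
  have : FiniteDimensional 𝕜 N :=
    (LinearEquiv.ofInjective (S : N →ₗ[𝕜] F) hS.injective).symm.finiteDimensional
  exact finiteDimensional_of_le M.le_topologicalClosure

end Normed

section InnerProduct

variable {𝕜 E F : Type*} [RCLike 𝕜] [NormedAddCommGroup E] [InnerProductSpace 𝕜 E]

section Approximation

variable [NormedAddCommGroup F] [NormedSpace 𝕜 F]

theorem norm_sub_comp_starProjection_le {T : E →L[𝕜] F} {δ : ℝ} (hδ : 0 ≤ δ) {N : Submodule 𝕜 E}
    [N.HasOrthogonalProjection] (hN : ∀ x ∈ Nᗮ, ‖T x‖ ≤ δ * ‖x‖) :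
    ‖T - T ∘L N.starProjection‖ ≤ δ := by
  refine ContinuousLinearMap.opNorm_le_bound _ hδ fun x => ?_
  calc ‖(T - T ∘L N.starProjection) x‖ = ‖T (Nᗮ.starProjection x)‖ := by
        simp [starProjection_orthogonal_val]
    _ ≤ δ * ‖Nᗮ.starProjection x‖ := hN _ (Nᗮ.starProjection_apply_mem x)
    _ ≤ δ * ‖x‖ := by gcongr; exact Nᗮ.norm_starProjection_apply_le x

theorem isCompactOperator_starProjection (N : Submodule 𝕜 E) [FiniteDimensional 𝕜 N] :
    IsCompactOperator N.starProjection := by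
  have : ProperSpace N := FiniteDimensional.proper 𝕜 N
  have hproj : IsCompactOperator N.orthogonalProjectionOnto :=
    isCompactOperator_of_locallyCompactSpace_dom N.orthogonalProjectionOnto
  exact hproj.clm_comp N.subtypeL

theorem isCompactOperator_of_forall_norm_le_on_orthogonal [CompleteSpace F] {T : E →L[𝕜] F}
    (hT : ∀ δ > 0, ∃ N : Submodule 𝕜 E, FiniteDimensional 𝕜 N ∧ ∀ x ∈ Nᗮ, ‖T x‖ ≤ δ * ‖x‖) :
    IsCompactOperator T := by
  have hclosed : IsClosed {S : E →L[𝕜] F | IsCompactOperator S} :=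
    isClosed_setOfPred_isCompactOperator
  refine hclosed.closure_subset (Metric.mem_closure_iff.2 fun ε hε => ?_)
  obtain ⟨N, _, hN⟩ := hT (ε / 2) (half_pos hε)
  refine ⟨T ∘L N.starProjection, (isCompactOperator_starProjection N).clm_comp T, ?_⟩
  rw [dist_eq_norm]
  exact (norm_sub_comp_starProjection_le (half_pos hε).le hN).trans_lt (half_lt_self hε)

end Approximation

variable [NormedAddCommGroup F] [InnerProductSpace 𝕜 F] {T : E →L[𝕜] F} {δ : ℝ}
  {M N : Submodule 𝕜 E}

theorem IsBoundedBelowOn.sup (hδ : 0 ≤ δ) (hM : IsBoundedBelowOn T δ M)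
    (hN : IsBoundedBelowOn T δ N) (hMN : M ⟂ N)
    (hTMN : M.map (T : E →ₗ[𝕜] F) ⟂ N.map (T : E →ₗ[𝕜] F)) : IsBoundedBelowOn T δ (M ⊔ N) := by
  intro z hz
  obtain ⟨x, hx, y, hy, rfl⟩ := mem_sup.1 hz
  have hxy : ⟪x, y⟫_𝕜 = 0 := hMN.inner_eq hx hy
  have hTxy : ⟪T x, T y⟫_𝕜 = 0 := hTMN.inner_eq (mem_map_of_mem hx) (mem_map_of_mem hy)
  refine le_of_sq_le_sq ?_ (norm_nonneg _)
  calc (δ * ‖x + y‖) ^ 2 = (δ * ‖x‖) ^ 2 + (δ * ‖y‖) ^ 2 := by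
        linear_combination
          δ ^ 2 * norm_add_sq_eq_norm_sq_add_norm_sq_of_inner_eq_zero x y hxy
    _ ≤ ‖T x‖ ^ 2 + ‖T y‖ ^ 2 := by
        gcongr
        exacts [hM x hx, hN y hy]
    _ = ‖T (x + y)‖ ^ 2 := by
        rw [map_add]
        linear_combination -norm_add_sq_eq_norm_sq_add_norm_sq_of_inner_eq_zero _ _ hTxy

theorem norm_le_of_maximal_isBoundedBelowOn (hδ : 0 ≤ δ) (hM : Maximal (IsBoundedBelowOn T δ) M)
    {x : E} (hx : x ∈ Mᗮ) (hTx : T x ∈ (M.map (T : E →ₗ[𝕜] F))ᗮ) : ‖T x‖ ≤ δ * ‖x‖ := by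
  by_contra! hlt
  have hsup : IsBoundedBelowOn T δ (M ⊔ 𝕜 ∙ x) := by
    refine hM.prop.sup hδ (.span_singleton hlt.le) ?_ ?_
    · rwa [isOrtho_comm, isOrtho_iff_le, span_singleton_le_iff_mem]
    · rwa [isOrtho_comm, isOrtho_iff_le, map_span, Set.image_singleton, span_singleton_le_iff_mem]
  have hxM : x ∈ M := hM.le_of_ge hsup le_sup_left (mem_sup_right (mem_span_singleton_self x))
  have hx0 : x = 0 := (mem_bot 𝕜).1 (M.inf_orthogonal_eq_bot ▸ ⟨hxM, hx⟩)
  simp [hx0] at hlt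

theorem exists_finiteDimensional_norm_le_on_orthogonal [CompleteSpace E] [CompleteSpace F]
    (hδ : 0 < δ)
    (hT : ∀ K : Submodule 𝕜 F, IsClosed (K : Set F) → (K : Set F) ⊆ Set.range T →
      FiniteDimensional 𝕜 K) :
    ∃ N : Submodule 𝕜 E, FiniteDimensional 𝕜 N ∧ ∀ x ∈ Nᗮ, ‖T x‖ ≤ δ * ‖x‖ := by
  obtain ⟨M, hM⟩ := exists_maximal_isBoundedBelowOn T δ
  have : FiniteDimensional 𝕜 M := finiteDimensional_of_isBoundedBelowOn hδ hM.prop hT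
  let L : Submodule 𝕜 E := M.map ((T† ∘L T : E →L[𝕜] E) : E →ₗ[𝕜] E)
  refine ⟨M ⊔ L, inferInstance, fun x hx => ?_⟩
  obtain ⟨hxM, hxL⟩ : x ∈ Mᗮ ∧ x ∈ Lᗮ := by rwa [← inf_orthogonal] at hx
  refine norm_le_of_maximal_isBoundedBelowOn hδ.le hM hxM ?_
  rintro _ ⟨m, hm, rfl⟩
  calc ⟪T m, T x⟫_𝕜 = ⟪(T†) (T m), x⟫_𝕜 := (T.adjoint_inner_left x (T m)).symm
    _ = 0 := hxL _ (mem_map_of_mem hm)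

theorem stmt11_general [CompleteSpace E] [CompleteSpace F] (T : E →L[𝕜] F) :
    IsCompactOperator T ↔
      ∀ K : Submodule 𝕜 F, IsClosed (K : Set F) →
        (K : Set F) ⊆ Set.range T → FiniteDimensional 𝕜 K :=
  ⟨fun hT _ => finiteDimensional_of_isCompactOperator_of_subset_range hT,
    fun hT => isCompactOperator_of_forall_norm_le_on_orthogonal fun _ hδ =>
      exists_finiteDimensional_norm_le_on_orthogonal hδ hT⟩

end InnerProduct

theorem stmt11 {H : Type*} [NormedAddCommGroup H] [InnerProductSpace ℂ H]
    [CompleteSpace H] (T : H →L[ℂ] H) :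
    IsCompactOperator T ↔
      ∀ K : Submodule ℂ H, IsClosed (K : Set H) →
        (K : Set H) ⊆ Set.range T → FiniteDimensional ℂ K :=
  stmt11_general T
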